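/- Let s ∈ ℕ and let K : ℝ^d × ℝ^d → ℝ be a Mercer kernel with K ∈ C_b^{2s+1}(ℝ^d × ℝ^d), and set κ² := ‖K‖_{C_b^{2s}(ℝ^d × ℝ^d)}. Then every f ∈ H_K belongs to C_b^s(ℝ^d), and the inclusion H_K ↪ C_b^s(ℝ^d) is a bounded linear map satisfying ‖f‖_{C_b^s} ≤ κ ‖f‖_{H_K} for all f ∈ H_K. -/

import Mathlib

noncomputable section
open MeasureTheory RealInnerProductSpace Filter

/-- `ℝ^n` with the Euclidean structure. -/
abbrev Euc (n : ℕ) : Type := EuclideanSpace ℝ (Fin n)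

/-- Directional derivative of a real-valued function in the direction `v`. -/
def dirDeriv {F : Type*} [NormedAddCommGroup F] [NormedSpace ℝ F] (v : F) (f : F → ℝ) :
    F → ℝ := fun x => fderiv ℝ f x v

/-- Iterated partial derivative `D^α f`, where the multi-index `α` is encoded as the list of
the directions of the partial derivatives that are taken. -/
def mderiv {F : Type*} [NormedAddCommGroup F] [NormedSpace ℝ F] (vs : List F) (f : F → ℝ) :
    F → ℝ := vs.foldr dirDeriv f

/-- The `i`-th coordinate vector of `ℝ^n`. -/
def ee (n : ℕ) (i : Fin n) : Euc n := EuclideanSpace.single i 1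

/-- The coordinate directions of `ℝ^n × ℝ^n`; lists of such directions encode the
multi-indices `(α, β)` of mixed partial derivatives `D^{(α,β)} K`. -/
def prodDirs (n : ℕ) : Set (Euc n × Euc n) :=
  (Set.range fun i : Fin n => ((ee n i, 0) : Euc n × Euc n)) ∪
    (Set.range fun i : Fin n => (((0 : Euc n), ee n i) : Euc n × Euc n))

/-- `K` is a Mercer kernel: symmetric and positive semidefinite. -/
def IsMercer {n : ℕ} (K : Euc n → Euc n → ℝ) : Prop :=
  (∀ x y, K x y = K y x) ∧
    ∀ (m : ℕ) (x : Fin m → Euc n) (c : Fin m → ℝ),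
      0 ≤ ∑ i, ∑ j, c i * c j * K (x i) (x j)

/-- `K ∈ C_b^s(ℝ^n × ℝ^n)` : `K` is `s`-times continuously differentiable, and every partial
derivative of order at most `s` is bounded. -/
def KernelCb (n s : ℕ) (K : Euc n → Euc n → ℝ) : Prop :=
  ContDiff ℝ s (fun p : Euc n × Euc n => K p.1 p.2) ∧
    ∀ l : List (Euc n × Euc n), (∀ v ∈ l, v ∈ prodDirs n) → l.length ≤ s →
      ∃ C, ∀ p : Euc n × Euc n, |mderiv l (fun q : Euc n × Euc n => K q.1 q.2) p| ≤ C

/-- `κ² ≥ ‖K‖_{C_b^s}` : every partial derivative of `K` of order at most `s` is bounded in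
absolute value by `κ²` (with `κ ≥ 0`). -/
def KernelDerivBound (n s : ℕ) (K : Euc n → Euc n → ℝ) (κ : ℝ) : Prop :=
  0 ≤ κ ∧ ∀ l : List (Euc n × Euc n), (∀ v ∈ l, v ∈ prodDirs n) → l.length ≤ s →
    ∀ p : Euc n × Euc n, |mderiv l (fun q : Euc n × Euc n => K q.1 q.2) p| ≤ κ ^ 2

/-- `(H, emb, sec)` realizes the RKHS `H_K` of the kernel `K` : `H` is a Hilbert space of
functions (the linear inclusion `emb` into functions on `ℝ^n` is injective), the kernel
sections `sec x = K (x, ·)` belong to `H`, and the reproducing property holds. -/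
def IsRKHS {n : ℕ} {H : Type*} [NormedAddCommGroup H] [InnerProductSpace ℝ H]
    (K : Euc n → Euc n → ℝ) (emb : H →ₗ[ℝ] (Euc n → ℝ)) (sec : Euc n → H) : Prop :=
  Function.Injective emb ∧ (∀ x, emb (sec x) = K x) ∧
    ∀ (f : H) (x : Euc n), emb f x = ⟪f, sec x⟫

open Topology

section FeatureMap

variable {E H : Type*} [NormedAddCommGroup E] [NormedSpace ℝ E]
  [NormedAddCommGroup H] [InnerProductSpace ℝ H]

/-- The kernel `(x, y) ↦ ⟪Φ x, Φ y⟫` of a feature map `Φ`. -/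
def featureKernel (Φ : E → H) : E × E → ℝ := fun p => ⟪Φ p.1, Φ p.2⟫

/-- A function into a Hilbert space converges as soon as its Gram function converges. -/
lemma exists_tendsto_of_tendsto_inner [CompleteSpace H] {ι : Type*} {l : Filter ι} [l.NeBot]
    {g : ι → H} {c : ℝ}
    (h : Tendsto (fun p : ι × ι => (⟪g p.1, g p.2⟫ : ℝ)) (l ×ˢ l) (𝓝 c)) :
    ∃ a, Tendsto g l (𝓝 a) := by
  have h₁ : Tendsto (fun p : ι × ι => (⟪g p.1, g p.1⟫ : ℝ)) (l ×ˢ l) (𝓝 c) :=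
    h.comp (tendsto_fst.prodMk tendsto_fst)
  have h₂ : Tendsto (fun p : ι × ι => (⟪g p.2, g p.2⟫ : ℝ)) (l ×ˢ l) (𝓝 c) :=
    h.comp (tendsto_snd.prodMk tendsto_snd)
  have hsq : Tendsto (fun p : ι × ι => ‖g p.1 - g p.2‖ ^ 2) (l ×ˢ l) (𝓝 0) := by
    have := (h₁.sub (h.const_mul 2)).add h₂
    rw [show c - 2 * c + c = 0 by ring] at this
    refine this.congr fun p => ?_
    rw [@norm_sub_sq_real, real_inner_self_eq_norm_sq, real_inner_self_eq_norm_sq]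
  have hdist : Tendsto (fun p : ι × ι => dist (g p.1) (g p.2)) (l ×ˢ l) (𝓝 0) := by
    have := hsq.sqrt
    rw [Real.sqrt_zero] at this
    refine this.congr fun p => ?_
    rw [Real.sqrt_sq (norm_nonneg _), dist_eq_norm]
  refine CompleteSpace.complete (cauchy_map_iff.2 ⟨inferInstance, ?_⟩)
  exact tendsto_uniformity_iff_dist_tendsto_zero.2 hdist

/-- Second-order expansion of the mixed increment of a `C²` function of two variables. -/
lemma exists_bilinear_mixed_increment {k : E × E → ℝ} (hk : ContDiff ℝ 2 k) (x : E) :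
    ∃ B : E →L[ℝ] E →L[ℝ] ℝ, ∀ ε > 0, ∃ δ > 0, ∀ u v : E, ‖u‖ < δ → ‖v‖ < δ →
      |k (x + u, x + v) - k (x, x + v) - k (x + u, x) + k (x, x) - B v u| ≤ ε * ‖u‖ * ‖v‖ := by
  set A : E × E → E →L[ℝ] ℝ := fun p => (fderiv ℝ k p).comp (.inl ℝ E E) with hA
  have hA1 : ContDiff ℝ 1 A :=
    (hk.fderiv_right (m := 1) (by norm_num)).clm_comp contDiff_const
  have hstrict : HasStrictFDerivAt A (fderiv ℝ A (x, x)) (x, x) :=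
    hA1.contDiffAt.hasStrictFDerivAt (by norm_num)
  refine ⟨(fderiv ℝ A (x, x)).comp (.inr ℝ E E), fun ε hε => ?_⟩
  have hev := hstrict.isLittleO.def hε
  rw [Metric.eventually_nhds_iff_ball] at hev
  obtain ⟨δ, hδ, hball⟩ := hev
  refine ⟨δ, hδ, fun u v hu hv => ?_⟩
  have hd : ∀ y z : E, HasFDerivAt (fun w => k (w, z)) (A (y, z)) y := fun y z =>
    ((hk.differentiable (by norm_num)) (y, z)).hasFDerivAt.comp y (hasFDerivAt_prodMk_left y z)
  have key := (convex_ball x δ).norm_image_sub_le_of_norm_hasFDerivWithin_le'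
    (f := fun w => k (w, x + v) - k (w, x))
    (f' := fun w => A (w, x + v) - A (w, x))
    (φ := fderiv ℝ A (x, x) (0, v)) (C := ε * ‖v‖) (x := x) (y := x + u)
    (fun w _ => ((hd w (x + v)).sub (hd w x)).hasFDerivWithinAt)
    (fun w hw => by
      have hb := hball ((w, x + v), (w, x)) (by
        rw [mem_ball_iff_norm] at hw ⊢
        simp [Prod.norm_def, hw, hv])
      simpa [Prod.norm_def] using hb)
    (Metric.mem_ball_self hδ) (by simpa using hu)
  rw [add_sub_cancel_left, Real.norm_eq_abs] at key
  calc _ = |k (x + u, x + v) - k (x + u, x) - (k (x, x + v) - k (x, x))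
        - (fderiv ℝ A (x, x) (0, v)) u| := by
        congr 1
        simp only [ContinuousLinearMap.comp_apply, ContinuousLinearMap.inr_apply]
        ring
    _ ≤ _ := key
    _ = _ := by ring

lemma differentiableAt_of_inner_increment [CompleteSpace H] {Φ : E → H} {x : E}
    {B : E →L[ℝ] E →L[ℝ] ℝ}
    (hB : ∀ ε > 0, ∃ δ > 0, ∀ u v : E, ‖u‖ < δ → ‖v‖ < δ →
      |⟪Φ (x + u) - Φ x, Φ (x + v) - Φ x⟫ - B v u| ≤ ε * ‖u‖ * ‖v‖) :
    DifferentiableAt ℝ Φ x := by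
  set D : E → H := fun u => Φ (x + u) - Φ x with hD
  have hsmall : ∀ (v : E) {δ : ℝ}, 0 < δ → ∀ᶠ t : ℝ in 𝓝[≠] 0, ‖t • v‖ < δ := fun v δ hδ => by
    have : Tendsto (fun t : ℝ => ‖t • v‖) (𝓝 0) (𝓝 0) := by
      have hc : Continuous fun t : ℝ => ‖t • v‖ := by fun_prop
      simpa using hc.tendsto 0
    exact (this.mono_left nhdsWithin_le_nhds).eventually (gt_mem_nhds hδ)
  have hquot : ∀ u v : E, Tendsto
      (fun p : ℝ × ℝ => (⟪p.1⁻¹ • D (p.1 • u), p.2⁻¹ • D (p.2 • v)⟫ : ℝ))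
      (𝓝[≠] 0 ×ˢ 𝓝[≠] 0) (𝓝 (B v u)) := by
    intro u v
    rw [Metric.tendsto_nhds]
    intro ε hε
    have hc : 0 < ‖u‖ * ‖v‖ + 1 := by positivity
    obtain ⟨δ, hδ, h⟩ := hB (ε / (‖u‖ * ‖v‖ + 1)) (by positivity)
    filter_upwards [((hsmall u hδ).and self_mem_nhdsWithin).prod_mk
      ((hsmall v hδ).and self_mem_nhdsWithin)] with ⟨s, t⟩ ⟨⟨hs, hs0⟩, ht, ht0⟩
    simp only [Set.mem_singleton_iff] at hs0 ht0
    have hst := h (s • u) (t • v) hs ht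
    simp only [map_smul, smul_apply, smul_eq_mul, norm_smul,
      Real.norm_eq_abs] at hst
    have hid : (⟪s⁻¹ • D (s • u), t⁻¹ • D (t • v)⟫ : ℝ) - B v u
        = (s⁻¹ * t⁻¹) * (⟪D (s • u), D (t • v)⟫ - t * (s * B v u)) := by
      rw [real_inner_smul_left, real_inner_smul_right]
      field_simp
    rw [Real.dist_eq, hid, abs_mul, abs_mul, abs_inv, abs_inv]
    have hsp : 0 < |s| := abs_pos.2 hs0
    have htp : 0 < |t| := abs_pos.2 ht0
    replace hst : |(⟪D (s • u), D (t • v)⟫ : ℝ) - t * (s * B v u)| ≤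
        ε / (‖u‖ * ‖v‖ + 1) * (|s| * ‖u‖) * (|t| * ‖v‖) := by
      convert hst using 3
      ring
    calc _ ≤ |s|⁻¹ * |t|⁻¹ * (ε / (‖u‖ * ‖v‖ + 1) * (|s| * ‖u‖) * (|t| * ‖v‖)) := by gcongr
      _ = ε * (‖u‖ * ‖v‖) / (‖u‖ * ‖v‖ + 1) := by field_simp
      _ < ε := by
        rw [div_lt_iff₀ hc]
        nlinarith
  choose L hL using fun v => exists_tendsto_of_tendsto_inner
    (g := fun t : ℝ => t⁻¹ • D (t • v)) (hquot v v)
  have hLL : ∀ u v, (⟪L u, L v⟫ : ℝ) = B v u := fun u v =>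
    tendsto_nhds_unique
      (((hL u).comp tendsto_fst).inner ((hL v).comp tendsto_snd)) (hquot u v)
  have hself : ∀ w : H, (⟪w, w⟫ : ℝ) = 0 → w = 0 := fun w => inner_self_eq_zero.1
  let T : E →ₗ[ℝ] H :=
    { toFun := L
      map_add' := fun u v => by
        rw [← sub_eq_zero]
        apply hself
        simp only [inner_sub_left, inner_sub_right, inner_add_left, inner_add_right, hLL, map_add,
          add_apply]
        ring
      map_smul' := fun c v => by
        rw [← sub_eq_zero]
        apply hself
        simp only [inner_sub_left, inner_sub_right, real_inner_smul_left, real_inner_smul_right,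
          hLL, map_smul, smul_apply, smul_eq_mul, RingHom.id_apply]
        ring }
  have hbound : ∀ v, ‖T v‖ ≤ Real.sqrt ‖B‖ * ‖v‖ := fun v => by
    refine (sq_le_sq₀ (norm_nonneg _) (by positivity)).1 ?_
    rw [mul_pow, Real.sq_sqrt (norm_nonneg B), ← real_inner_self_eq_norm_sq]
    change (⟪L v, L v⟫ : ℝ) ≤ _
    rw [hLL]
    calc B v v ≤ ‖B v v‖ := Real.le_norm_self _
      _ ≤ ‖B‖ * ‖v‖ * ‖v‖ := B.le_opNorm₂ v v
      _ = _ := by ring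
  refine ⟨T.mkContinuous _ hbound, ?_⟩
  rw [hasFDerivAt_iff_isLittleO_nhds_zero, Asymptotics.isLittleO_iff]
  intro c hc
  obtain ⟨δ, hδ, h⟩ := hB (c ^ 2 / 3) (by positivity)
  filter_upwards [Metric.ball_mem_nhds (0 : E) hδ] with u hu
  rw [mem_ball_zero_iff] at hu
  have hDL : |(⟪D u, L u⟫ : ℝ) - B u u| ≤ c ^ 2 / 3 * ‖u‖ * ‖u‖ := by
    have hlim : Tendsto (fun t : ℝ => |(⟪D u, t⁻¹ • D (t • u)⟫ : ℝ) - B u u|) (𝓝[≠] 0)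
        (𝓝 |(⟪D u, L u⟫ : ℝ) - B u u|) :=
      ((tendsto_const_nhds.inner (hL u)).sub_const _).abs
    refine le_of_tendsto hlim ?_
    filter_upwards [hsmall u hδ, self_mem_nhdsWithin] with t ht ht0
    have htp : 0 < |t| := abs_pos.2 ht0
    have ht0' : t ≠ 0 := ht0
    have hst := h u (t • u) hu ht
    simp only [map_smul, smul_apply, smul_eq_mul, norm_smul,
      Real.norm_eq_abs] at hst
    have hid : (⟪D u, t⁻¹ • D (t • u)⟫ : ℝ) - B u u
        = t⁻¹ * (⟪D u, D (t • u)⟫ - t * B u u) := by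
      rw [real_inner_smul_right]
      field_simp
    rw [hid, abs_mul, abs_inv]
    calc _ ≤ |t|⁻¹ * (c ^ 2 / 3 * ‖u‖ * (|t| * ‖u‖)) := by gcongr
      _ = _ := by field_simp
  have hDD := h u u hu hu
  change ‖D u - L u‖ ≤ _ at *
  refine (sq_le_sq₀ (norm_nonneg _) (by positivity)).1 ?_
  have hDD' : |(⟪D u, D u⟫ : ℝ) - B u u| ≤ c ^ 2 / 3 * ‖u‖ * ‖u‖ := hDD
  rw [@norm_sub_sq_real, ← real_inner_self_eq_norm_sq, ← real_inner_self_eq_norm_sq, hLL, mul_pow]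
  have h₁ := (abs_le.1 hDL).1
  have h₂ := (abs_le.1 hDD').2
  nlinarith

/-- A feature map is differentiable if its kernel is of class `C²`. -/
lemma differentiable_of_contDiff_featureKernel [CompleteSpace H] {Φ : E → H}
    (h : ContDiff ℝ 2 (featureKernel Φ)) : Differentiable ℝ Φ := fun x => by
  obtain ⟨B, hB⟩ := exists_bilinear_mixed_increment h x
  refine differentiableAt_of_inner_increment (B := B) fun ε hε => ?_
  obtain ⟨δ, hδ, huv⟩ := hB ε hε
  refine ⟨δ, hδ, fun u v hu hv => ?_⟩
  convert huv u v hu hv using 3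
  simp only [featureKernel, inner_sub_left, inner_sub_right]
  ring

/-- The kernel of a directional derivative of a feature map is a mixed second derivative. -/
lemma featureKernel_fderiv {Φ : E → H} (hΦ : Differentiable ℝ Φ)
    (h : ContDiff ℝ 2 (featureKernel Φ)) (v : E) :
    featureKernel (fun x => fderiv ℝ Φ x v)
      = dirDeriv (0, v) (dirDeriv (v, 0) (featureKernel Φ)) := by
  have h₁ : dirDeriv (v, 0) (featureKernel Φ) = fun p => (⟪fderiv ℝ Φ p.1 v, Φ p.2⟫ : ℝ) := by
    funext p
    have hk : HasFDerivAt (fun y => featureKernel Φ (y, p.2))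
        ((fderiv ℝ (featureKernel Φ) p).comp (.inl ℝ E E)) p.1 :=
      HasFDerivAt.comp (g := featureKernel Φ) (f := fun y => (y, p.2)) p.1
        (h.differentiable (by norm_num) p).hasFDerivAt (hasFDerivAt_prodMk_left p.1 p.2)
    have hi := ((hΦ p.1).hasFDerivAt).inner ℝ (hasFDerivAt_const (Φ p.2) p.1)
    have := congrArg (fun T => T v) (hk.unique hi)
    simpa [dirDeriv] using this
  have h₂ : ContDiff ℝ 1 (dirDeriv (v, 0) (featureKernel Φ)) :=
    (h.fderiv_right (m := 1) (by norm_num)).clm_apply contDiff_const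
  funext p
  have hk : HasFDerivAt (fun y => dirDeriv (v, 0) (featureKernel Φ) (p.1, y))
      ((fderiv ℝ (dirDeriv (v, 0) (featureKernel Φ)) p).comp (.inr ℝ E E)) p.2 :=
    ((h₂.differentiable (by norm_num)) (p.1, p.2)).hasFDerivAt.comp p.2
      (hasFDerivAt_prodMk_right p.1 p.2)
  have hi := (hasFDerivAt_const (fderiv ℝ Φ p.1 v) p.2).inner ℝ ((hΦ p.2).hasFDerivAt)
  have hk' := hk
  simp only [h₁] at hk'
  have := congrArg (fun T => T v) (hk'.unique hi)
  simp only [← h₁] at this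
  simpa [dirDeriv, featureKernel] using this.symm

lemma ContDiff.dirDeriv {f : E → ℝ} {n : ℕ} (h : ContDiff ℝ (n + 1 : ℕ) f) (v : E) :
    ContDiff ℝ n (dirDeriv v f) :=
  (h.fderiv_right (m := n) (by norm_cast)).clm_apply contDiff_const

lemma ContDiff.featureKernel_fderiv {Φ : E → H} (hΦ : Differentiable ℝ Φ) {n : ℕ}
    (h : ContDiff ℝ (2 * (n + 1) : ℕ) (featureKernel Φ)) (v : E) :
    ContDiff ℝ (2 * n : ℕ) (featureKernel fun x => fderiv ℝ Φ x v) := by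
  rw [_root_.featureKernel_fderiv hΦ (h.of_le (by norm_cast; omega))]
  exact ContDiff.dirDeriv (ContDiff.dirDeriv h _) _

/-- A feature map is of class `Cⁿ` if its kernel is of class `C²ⁿ`. -/
lemma contDiff_of_contDiff_featureKernel [CompleteSpace H] [FiniteDimensional ℝ E] {n : ℕ}
    {Φ : E → H} (h : ContDiff ℝ (2 * n : ℕ) (featureKernel Φ)) : ContDiff ℝ n Φ := by
  induction n generalizing Φ with
  | zero =>
    rw [Nat.cast_zero, contDiff_zero, continuous_iff_continuousAt]
    intro x
    have hc : Continuous (featureKernel Φ) := h.continuous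
    have hlim : Tendsto (fun y => ‖Φ y - Φ x‖ ^ 2) (𝓝 x) (𝓝 0) := by
      have hcont : Continuous fun y => featureKernel Φ (y, y) - 2 * featureKernel Φ (y, x)
          + featureKernel Φ (x, x) := by fun_prop
      have := hcont.tendsto x
      rw [show featureKernel Φ (x, x) - 2 * featureKernel Φ (x, x)
          + featureKernel Φ (x, x) = 0 by ring] at this
      refine this.congr fun y => ?_
      rw [@norm_sub_sq_real, ← real_inner_self_eq_norm_sq, ← real_inner_self_eq_norm_sq]
      rfl
    refine tendsto_iff_norm_sub_tendsto_zero.2 ?_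
    have := hlim.sqrt
    rw [Real.sqrt_zero] at this
    exact this.congr fun y => Real.sqrt_sq (norm_nonneg _)
  | succ n ih =>
    have hΦ : Differentiable ℝ Φ :=
      differentiable_of_contDiff_featureKernel (h.of_le (by norm_cast; omega))
    rw [Nat.cast_succ, contDiff_succ_iff_fderiv]
    refine ⟨hΦ, by simp, contDiff_clm_apply_iff.2 fun v => ih ?_⟩
    exact ContDiff.featureKernel_fderiv hΦ h v

end FeatureMap

/-- Iterated partial derivatives of `x ↦ ⟪f, Φ x⟫` are represented by a feature map whose kernel
is an iterated partial derivative of the kernel of `Φ`. -/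
lemma exists_featureMap_mderiv {d : ℕ} {H : Type*} [NormedAddCommGroup H]
    [InnerProductSpace ℝ H] [CompleteSpace H] {Φ : Euc d → H} (α : List (Fin d)) (n : ℕ)
    (h : ContDiff ℝ (2 * (n + α.length) : ℕ) (featureKernel Φ)) :
    ∃ Ψ : Euc d → H,
      (∀ f : H, mderiv (α.map (ee d)) (fun x => (⟪f, Φ x⟫ : ℝ)) = fun x => (⟪f, Ψ x⟫ : ℝ)) ∧
      ContDiff ℝ (2 * n : ℕ) (featureKernel Ψ) ∧
      ∃ l : List (Euc d × Euc d), (∀ v ∈ l, v ∈ prodDirs d) ∧ l.length = 2 * α.length ∧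
        featureKernel Ψ = mderiv l (featureKernel Φ) := by
  induction α generalizing n with
  | nil => exact ⟨Φ, fun f => rfl, h, [], by simp, rfl, rfl⟩
  | cons a α ih =>
    obtain ⟨Ψ, hΨ, hC, l, hl, hlen, hker⟩ := ih (n + 1) (by
      rwa [List.length_cons, show n + (α.length + 1) = n + 1 + α.length by ring] at h)
    have hC2 : ContDiff ℝ 2 (featureKernel Ψ) := hC.of_le (by norm_cast; omega)
    have hd : Differentiable ℝ Ψ := differentiable_of_contDiff_featureKernel hC2
    refine ⟨fun x => fderiv ℝ Ψ x (ee d a), fun f => ?_, ContDiff.featureKernel_fderiv hd hC _,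
      (0, ee d a) :: (ee d a, 0) :: l, ?_, ?_, ?_⟩
    · change dirDeriv (ee d a) (mderiv (α.map (ee d)) _) = _
      rw [hΨ]
      funext x
      have hi := (hasFDerivAt_const f x).inner ℝ (hd x).hasFDerivAt
      simp [dirDeriv, hi.fderiv]
    · intro v hv
      rcases List.mem_cons.1 hv with rfl | hv
      · exact Or.inr ⟨a, rfl⟩
      rcases List.mem_cons.1 hv with rfl | hv
      · exact Or.inl ⟨a, rfl⟩
      · exact hl v hv
    · simp only [List.length_cons, hlen]
      ring
    · rw [featureKernel_fderiv hd hC2, hker]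
      rfl

/-- Theorem 2.8 (iii): if `K` is a Mercer kernel of class `C_b^{2s+1}(ℝ^d × ℝ^d)` and
`κ² = ‖K‖_{C_b^{2s}}`, then every `f ∈ H_K` belongs to `C_b^s(ℝ^d)` and the inclusion
`H_K ↪ C_b^s(ℝ^d)` (which is linear since `emb` is) is bounded:
`‖f‖_{C_b^s} = sup_{|α| ≤ s} ‖D^α f‖_∞ ≤ κ ‖f‖_{H_K}`. -/
theorem rkhs_embedding_into_Cb
    {d s : ℕ} (K : Euc d → Euc d → ℝ) (κ : ℝ)
    (hMercer : IsMercer K)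
    (hCb : KernelCb d (2 * s + 1) K)
    (hκ : KernelDerivBound d (2 * s) K κ)
    {H : Type*} [NormedAddCommGroup H] [InnerProductSpace ℝ H] [CompleteSpace H]
    (emb : H →ₗ[ℝ] (Euc d → ℝ)) (sec : Euc d → H)
    (hRKHS : IsRKHS K emb sec) :
    ∀ f : H, ContDiff ℝ s (emb f) ∧
      ∀ α : List (Fin d), α.length ≤ s → ∀ x : Euc d,
        |mderiv (α.map (ee d)) (emb f) x| ≤ κ * ‖f‖ := by
  intro f
  obtain ⟨-, hsec, hrep⟩ := hRKHS
  have hker : featureKernel sec = fun p : Euc d × Euc d => K p.1 p.2 := by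
    funext p
    rw [featureKernel, ← hrep, hsec]
  have hsmooth : ContDiff ℝ (2 * s : ℕ) (featureKernel sec) := by
    rw [hker]
    exact hCb.1.of_le (by norm_cast; omega)
  have hf : emb f = fun x => (⟪f, sec x⟫ : ℝ) := funext (hrep f)
  refine ⟨?_, fun α hα x => ?_⟩
  · rw [hf]
    exact contDiff_const.inner ℝ (contDiff_of_contDiff_featureKernel hsmooth)
  · obtain ⟨Ψ, hΨ, -, l, hl, hlen, hΨker⟩ := exists_featureMap_mderiv (Φ := sec) α
      (s - α.length) (by rwa [Nat.sub_add_cancel hα])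
    have hnorm : ‖Ψ x‖ ≤ κ := by
      refine (sq_le_sq₀ (norm_nonneg _) hκ.1).1 ?_
      have hb := hκ.2 l hl (by omega) (x, x)
      rw [← hker, ← hΨker] at hb
      rw [← real_inner_self_eq_norm_sq]
      exact (le_abs_self _).trans hb
    rw [hf, hΨ]
    calc |(⟪f, Ψ x⟫ : ℝ)| ≤ ‖f‖ * ‖Ψ x‖ := abs_real_inner_le_norm f (Ψ x)
      _ ≤ ‖f‖ * κ := by gcongr
      _ = κ * ‖f‖ := mul_comm _ _
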